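/- For every s ∈ S⁺ and every admissible partition v ∈ AP(s), the Möbius function of the lattice AP(s) satisfies m(v|1_s) = (−1)^{b(v)−1} a(v), where b(v) is the number of blocks of v and a(v) is the number of admissible shuffles of v. -/

import Mathlib

/-- The two-letter alphabet `{z, w}`. -/
inductive Letter | z | w
deriving DecidableEq

/-- Words: elements of the free monoid `S = FS({z,w})`. -/
abbrev Word := List Letter

/-- The letter of `s` at position `j` (defaulting to `z`). -/
def letterAt (s : Word) (j : ℕ) : Letter := s.getD j Letter.z

/-- `P` is a partition of the finite set of positions `g ⊆ ℕ` into nonempty blocks. -/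
def IsPartitionOn (g : Finset ℕ) (P : Finset (Finset ℕ)) : Prop :=
  (∀ b ∈ P, b.Nonempty) ∧ (P : Set (Finset ℕ)).PairwiseDisjoint id ∧ P.sup id = g

/-- The position `j` is inner with respect to the block `b`:
`j ∉ b` and `min b < j < max b`. -/
def InnerPos (j : ℕ) (b : Finset ℕ) : Prop :=
  j ∉ b ∧ ∃ i ∈ b, ∃ k ∈ b, i < j ∧ j < k

/-- A partition is admissible if no block contains a letter `w` that is inner
with respect to another block. -/
def Admissible (s : Word) (P : Finset (Finset ℕ)) : Prop :=
  ∀ b ∈ P, ∀ b' ∈ P, b ≠ b' → ∀ j ∈ b, letterAt s j = Letter.w → ¬ InnerPos j b'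

open scoped Classical in
/-- The set `AP(s)` of admissible partitions of the positions `g` of the word `s`. -/
noncomputable def APfin (s : Word) (g : Finset ℕ) : Finset (Finset (Finset ℕ)) :=
  g.powerset.powerset.filter fun P => IsPartitionOn g P ∧ Admissible s P

/-- The subword of `s` determined by a set of positions `b`. -/
def wordOf (s : Word) (b : Finset ℕ) : Word :=
  (b.sort (· ≤ ·)).map (letterAt s)

/-- `L` is the family of admissible cumulants of the moment function `M`:
`M(s) = Σ_{u ∈ AP(s)} L(u₁)⋯L(u_p)` for every nonempty word `s`. -/
def IsCumulants (M L : Word → ℂ) : Prop :=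
  ∀ s : Word, s ≠ [] →
    M s = ∑ P ∈ APfin s (Finset.range s.length), ∏ b ∈ P, L (wordOf s b)

/-- `P` refines `Q`: every block of `P` is contained in a block of `Q`. -/
def Refines (P Q : Finset (Finset ℕ)) : Prop := ∀ b ∈ P, ∃ c ∈ Q, b ⊆ c

open scoped Classical in
/-- `m` is the Möbius function of the lattice `AP(s)` of admissible partitions of
the position set `g` of `s`: `m(u|u) = 1` and `m(u|v) = −Σ_{u ≤ t < v} m(u|t)`. -/
noncomputable def IsMobius (s : Word) (g : Finset ℕ)
    (m : Finset (Finset ℕ) → Finset (Finset ℕ) → ℂ) : Prop :=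
  (∀ u ∈ APfin s g, m u u = 1) ∧
    ∀ u ∈ APfin s g, ∀ v ∈ APfin s g, Refines u v → u ≠ v →
      m u v = -∑ t ∈ (APfin s g).filter fun t => Refines u t ∧ Refines t v ∧ t ≠ v, m u t

/-- `c` is the last block of `P`: the block with the largest least element. -/
def IsLastBlock (P : Finset (Finset ℕ)) (c : Finset ℕ) : Prop :=
  c ∈ P ∧ ∀ b ∈ P, b ≠ c → ∃ i ∈ b, ∀ j ∈ c, i < j

/-- One transition of a shuffle: merge the last block of `P` into one of the other
blocks. -/
def MergeStep (P Q : Finset (Finset ℕ)) : Prop :=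
  ∃ c, IsLastBlock P c ∧ ∃ b ∈ P, b ≠ c ∧ Q = insert (b ∪ c) ((P.erase b).erase c)

/-- `a(u)`: the number of admissible shuffles of `u`, i.e. of sequences
`u = u⁰ → u¹ → ⋯ → 1_s` of admissible partitions of `s`, each obtained from the
previous one by merging its last block into another block (`a(u) = 0` if `u` is
not an admissible partition of `s`). -/
noncomputable def shuffleCount (s : Word) (u : Finset (Finset ℕ)) : ℕ :=
  Set.ncard {Lst : List (Finset (Finset ℕ)) |
    Lst.head? = some u ∧ Lst.getLast? = some {Finset.range s.length} ∧
    (∀ P ∈ Lst, P ∈ APfin s (Finset.range s.length)) ∧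
    Lst.Chain' MergeStep}

/-! ### Abstract Weisner-type lemma -/

open scoped Classical in
theorem weisner_aux {α : Type} [Fintype α] [SemilatticeInf α] (T : α)
    (f : α → ℂ) (hf : ∀ v, v ≠ T → ∑ x with v ≤ x, f x = 0)
    (hT : ∀ x, x ≤ T) (a : α) (ha : a ≠ T) :
    ∀ v, v ≤ a → ∑ x with x ⊓ a = v, f x = 0 := by
  intro v
  induction v using WellFoundedGT.induction with
  | _ v ih =>
    intro hva
    have hvT : v ≠ T := by
      rintro rfl
      exact ha (le_antisymm (hT a) hva)
    have h1 := hf v hvT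
    have h2 : ∑ y with v ≤ y ∧ y ≤ a, ∑ x ∈ (Finset.univ.filter fun x => v ≤ x) with x ⊓ a = y, f x
        = ∑ x with v ≤ x, f x := by
      apply Finset.sum_fiberwise_of_maps_to
      intro x hx
      simp only [Finset.mem_filter, Finset.mem_univ, true_and] at hx ⊢
      exact ⟨le_inf hx hva, inf_le_right⟩
    rw [h1, Finset.sum_eq_single v] at h2
    · rw [← h2]
      apply Finset.sum_congr _ (fun _ _ => rfl)
      ext x
      simp only [Finset.mem_filter, Finset.mem_univ, true_and]
      constructor
      · rintro h
        exact ⟨h ▸ inf_le_left, h⟩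
      · exact fun h => h.2
    · intro y hy hyv
      simp only [Finset.mem_filter, Finset.mem_univ, true_and] at hy
      rw [← ih y (lt_of_le_of_ne hy.1 (Ne.symm hyv)) hy.2]
      apply Finset.sum_congr _ (fun _ _ => rfl)
      ext x
      simp only [Finset.mem_filter, Finset.mem_univ, true_and]
      constructor
      · exact fun h => h.2
      · rintro h
        exact ⟨le_trans hy.1 (h ▸ inf_le_left), h⟩
    · intro h
      simp only [Finset.mem_filter, Finset.mem_univ, true_and, le_refl] at h
      exact absurd hva h

/-! ### Admissible partitions as a semilattice -/

theorem mem_AP_iff {s : Word} {g : Finset ℕ} {P : Finset (Finset ℕ)} :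
    P ∈ APfin s g ↔ IsPartitionOn g P ∧ Admissible s P := by
  unfold APfin
  simp only [Finset.mem_filter, Finset.mem_powerset, and_iff_right_iff_imp]
  rintro ⟨⟨-, -, h⟩, -⟩ b hb
  rw [Finset.mem_powerset, ← h]
  exact Finset.le_sup (f := id) hb

theorem part_unique {g : Finset ℕ} {P : Finset (Finset ℕ)} (h : IsPartitionOn g P)
    {b c : Finset ℕ} (hb : b ∈ P) (hc : c ∈ P) {i : ℕ} (hib : i ∈ b) (hic : i ∈ c) : b = c := by
  by_contra hne
  exact Finset.disjoint_left.1 (h.2.1 hb hc hne) hib hic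

theorem part_cover {g : Finset ℕ} {P : Finset (Finset ℕ)} (h : IsPartitionOn g P)
    {i : ℕ} : i ∈ g ↔ ∃ b ∈ P, i ∈ b := by
  rw [← h.2.2, Finset.mem_sup]
  rfl

theorem part_sub {g : Finset ℕ} {P : Finset (Finset ℕ)} (h : IsPartitionOn g P)
    {b : Finset ℕ} (hb : b ∈ P) : b ⊆ g := fun _ hi => (part_cover h).2 ⟨b, hb, hi⟩

theorem mk_part {g : Finset ℕ} {P : Finset (Finset ℕ)} (h1 : ∀ b ∈ P, b.Nonempty)
    (h2 : ∀ b ∈ P, ∀ c ∈ P, ∀ i ∈ b, i ∈ c → b = c)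
    (h3 : ∀ i, i ∈ g ↔ ∃ b ∈ P, i ∈ b) : IsPartitionOn g P := by
  refine ⟨h1, ?_, ?_⟩
  · intro b hb c hc hne
    exact Finset.disjoint_left.2 fun i hi hi' => hne (h2 b hb c hc i hi hi')
  · ext i
    rw [h3, Finset.mem_sup]
    rfl

theorem refines_antisymm_sub {g : Finset ℕ} {P Q : Finset (Finset ℕ)} (hP : IsPartitionOn g P)
    (h1 : Refines P Q) (h2 : Refines Q P) : P ⊆ Q := by
  intro b hb
  obtain ⟨c, hc, hbc⟩ := h1 b hb
  obtain ⟨d, hd, hcd⟩ := h2 c hc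
  obtain ⟨i, hi⟩ := hP.1 b hb
  have := part_unique hP hb hd hi (hcd (hbc hi))
  subst this
  rwa [Finset.Subset.antisymm hbc hcd]

/-- Common refinement. -/
def meetP (P Q : Finset (Finset ℕ)) : Finset (Finset ℕ) :=
  ((P ×ˢ Q).image fun x => x.1 ∩ x.2).filter fun b => b.Nonempty

theorem mem_meetP {P Q : Finset (Finset ℕ)} {d : Finset ℕ} :
    d ∈ meetP P Q ↔ d.Nonempty ∧ ∃ b ∈ P, ∃ c ∈ Q, b ∩ c = d := by
  simp only [meetP, Finset.mem_filter, Finset.mem_image, Finset.mem_product, Prod.exists]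
  constructor
  · rintro ⟨⟨b, c, ⟨hb, hc⟩, h⟩, hd⟩
    exact ⟨hd, b, hb, c, hc, h⟩
  · rintro ⟨hd, b, hb, c, hc, h⟩
    exact ⟨⟨b, c, ⟨hb, hc⟩, h⟩, hd⟩

theorem meetP_mem {s : Word} {g : Finset ℕ} {P Q : Finset (Finset ℕ)}
    (hP : P ∈ APfin s g) (hQ : Q ∈ APfin s g) : meetP P Q ∈ APfin s g := by
  rw [mem_AP_iff] at *
  obtain ⟨hP, aP⟩ := hP
  obtain ⟨hQ, aQ⟩ := hQ
  refine ⟨mk_part ?_ ?_ ?_, ?_⟩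
  · intro b hb
    exact (mem_meetP.1 hb).1
  · intro d hd d' hd' i hi hi'
    obtain ⟨-, b, hb, c, hc, rfl⟩ := mem_meetP.1 hd
    obtain ⟨-, b', hb', c', hc', rfl⟩ := mem_meetP.1 hd'
    rw [Finset.mem_inter] at hi hi'
    rw [part_unique hP hb hb' hi.1 hi'.1, part_unique hQ hc hc' hi.2 hi'.2]
  · intro i
    constructor
    · intro hi
      obtain ⟨b, hb, hib⟩ := (part_cover hP).1 hi
      obtain ⟨c, hc, hic⟩ := (part_cover hQ).1 hi
      have : i ∈ b ∩ c := Finset.mem_inter.2 ⟨hib, hic⟩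
      exact ⟨b ∩ c, mem_meetP.2 ⟨⟨i, this⟩, b, hb, c, hc, rfl⟩, this⟩
    · rintro ⟨d, hd, hi⟩
      obtain ⟨-, b, hb, c, hc, rfl⟩ := mem_meetP.1 hd
      exact part_sub hP hb (Finset.mem_inter.1 hi).1
  · intro d hd d' hd' hne j hj hw hin
    obtain ⟨-, b, hb, c, hc, rfl⟩ := mem_meetP.1 hd
    obtain ⟨-, b', hb', c', hc', rfl⟩ := mem_meetP.1 hd'
    obtain ⟨-, i, hi, k, hk, hij, hjk⟩ := hin
    rw [Finset.mem_inter] at hi hj hk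
    by_cases h : b = b'
    · have h' : c ≠ c' := by
        rintro rfl
        exact hne (by rw [h])
      exact aQ c hc c' hc' h' j hj.2 hw
        ⟨fun h'' => h' (part_unique hQ hc hc' hj.2 h''), i, hi.2, k, hk.2, hij, hjk⟩
    · exact aP b hb b' hb' h j hj.1 hw
        ⟨fun h'' => h (part_unique hP hb hb' hj.1 h''), i, hi.1, k, hk.1, hij, hjk⟩

/-- The type of admissible partitions. -/
def APT (s : Word) (g : Finset ℕ) : Type := {P : Finset (Finset ℕ) // P ∈ APfin s g}

noncomputable instance instFintypeAPT (s : Word) (g : Finset ℕ) : Fintype (APT s g) :=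
  inferInstanceAs (Fintype {P : Finset (Finset ℕ) // P ∈ APfin s g})

instance instSemiAPT (s : Word) (g : Finset ℕ) : SemilatticeInf (APT s g) where
  le P Q := Refines P.1 Q.1
  le_refl P := fun b hb => ⟨b, hb, Finset.Subset.refl b⟩
  le_trans P Q R h1 h2 := by
    intro b hb
    obtain ⟨c, hc, h⟩ := h1 b hb
    obtain ⟨d, hd, h'⟩ := h2 c hc
    exact ⟨d, hd, h.trans h'⟩
  le_antisymm P Q h1 h2 := Subtype.ext (Finset.Subset.antisymm
    (refines_antisymm_sub (mem_AP_iff.1 P.2).1 h1 h2)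
    (refines_antisymm_sub (mem_AP_iff.1 Q.2).1 h2 h1))
  inf P Q := ⟨meetP P.1 Q.1, meetP_mem P.2 Q.2⟩
  inf_le_left P Q := by
    intro d hd
    obtain ⟨-, b, hb, c, hc, rfl⟩ := mem_meetP.1 hd
    exact ⟨b, hb, Finset.inter_subset_left⟩
  inf_le_right P Q := by
    intro d hd
    obtain ⟨-, b, hb, c, hc, rfl⟩ := mem_meetP.1 hd
    exact ⟨c, hc, Finset.inter_subset_right⟩
  le_inf P Q R h1 h2 := by
    intro d hd
    obtain ⟨b, hb, hdb⟩ := h1 d hd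
    obtain ⟨c, hc, hdc⟩ := h2 d hd
    have hdd : d ⊆ b ∩ c := Finset.subset_inter hdb hdc
    exact ⟨b ∩ c, mem_meetP.2 ⟨((mem_AP_iff.1 P.2).1.1 d hd).mono hdd, b, hb, c, hc, rfl⟩, hdd⟩

theorem top_mem {s : Word} {g : Finset ℕ} (hg : g.Nonempty) : {g} ∈ APfin s g := by
  rw [mem_AP_iff]
  refine ⟨mk_part ?_ ?_ ?_, ?_⟩
  · simpa using hg
  · intro b hb c hc i _ _
    rw [Finset.mem_singleton] at hb hc
    rw [hb, hc]
  · simp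
  · intro b hb c hc hne
    rw [Finset.mem_singleton] at hb hc
    exact absurd (hb.trans hc.symm) hne

open scoped Classical in
theorem mobius_dual {s : Word} {g : Finset ℕ} {m : Finset (Finset ℕ) → Finset (Finset ℕ) → ℂ}
    (hm : IsMobius s g m) (T v : APT s g) (hT : ∀ x, x ≤ T) (hv : v ≠ T) :
    ∑ x with v ≤ x, m x.1 T.1 = 0 := by
  let M : Matrix (APT s g) (APT s g) ℂ := fun u t => if u ≤ t then m u.1 t.1 else 0
  let Z : Matrix (APT s g) (APT s g) ℂ := fun u t => if u ≤ t then 1 else 0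
  have hMZ : M * Z = 1 := by
    ext u t
    rw [Matrix.mul_apply, Matrix.one_apply]
    have e : ∀ x : APT s g, M u x * Z x t = if u ≤ x ∧ x ≤ t then m u.1 x.1 else 0 := by
      intro x
      simp only [M, Z]
      split_ifs <;> simp_all
    simp only [e]
    rw [← Finset.sum_filter]
    split_ifs with h
    · subst h
      have : (Finset.univ.filter fun x : APT s g => u ≤ x ∧ x ≤ u) = {u} := by
        ext x
        simp only [Finset.mem_filter, Finset.mem_univ, true_and, Finset.mem_singleton]
        constructor
        · exact fun h => le_antisymm h.2 h.1
        · rintro rfl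
          exact ⟨le_rfl, le_rfl⟩
      rw [this, Finset.sum_singleton]
      exact hm.1 _ u.2
    · by_cases hut : u ≤ t
      · have h1 := hm.2 u.1 u.2 t.1 t.2 hut (fun h' => h (Subtype.ext h'))
        have h2 : (Finset.univ.filter fun x : APT s g => u ≤ x ∧ x ≤ t)
            = insert t (Finset.univ.filter fun x : APT s g => u ≤ x ∧ x ≤ t ∧ x ≠ t) := by
          ext x
          simp only [Finset.mem_filter, Finset.mem_univ, true_and, Finset.mem_insert]
          constructor
          · intro hx
            by_cases hxt : x = t
            · exact Or.inl hxt
            · exact Or.inr ⟨hx.1, hx.2, hxt⟩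
          · rintro (rfl | hx)
            · exact ⟨hut, le_rfl⟩
            · exact ⟨hx.1, hx.2.1⟩
        rw [h2, Finset.sum_insert (by simp), h1, neg_add_eq_zero]
        symm
        refine Finset.sum_bij (fun x _ => x.1) ?_ ?_ ?_ ?_
        · intro x hx
          have hx' := (Finset.mem_filter.1 hx).2
          exact Finset.mem_filter.2
            ⟨x.2, hx'.1, hx'.2.1, fun h' => hx'.2.2 (Subtype.ext h')⟩
        · intro x _ y _ hxy
          exact Subtype.ext hxy
        · intro x hx
          rw [Finset.mem_filter] at hx
          refine ⟨⟨x, hx.1⟩, ?_, rfl⟩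
          exact Finset.mem_filter.2 ⟨Finset.mem_univ _,
            hx.2.1, hx.2.2.1, fun h' => hx.2.2.2 (congrArg Subtype.val h')⟩
        · intro x _
          rfl
      · apply Finset.sum_eq_zero
        intro x hx
        simp only [Finset.mem_filter, Finset.mem_univ, true_and] at hx
        exact absurd (hx.1.trans hx.2) hut
  have hZM : Z * M = 1 := mul_eq_one_comm.1 hMZ
  have h := congrFun (congrFun hZM v) T
  rw [Matrix.mul_apply, Matrix.one_apply, if_neg hv] at h
  rw [← h, Finset.sum_filter]
  apply Finset.sum_congr rfl
  intro x _
  simp only [M, Z, hT x, if_true]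
  split_ifs <;> simp

/-! ### Last blocks and merge steps -/

theorem exists_last {g : Finset ℕ} {v : Finset (Finset ℕ)} (hv : IsPartitionOn g v)
    (hg : g.Nonempty) : ∃ c, IsLastBlock v c := by
  obtain ⟨i, hi⟩ := hg
  obtain ⟨b0, hb0, -⟩ := (part_cover hv).1 hi
  obtain ⟨c, hc, hmax⟩ := Finset.exists_max_image v (fun b => sInf (b : Set ℕ)) ⟨b0, hb0⟩
  refine ⟨c, hc, fun b hb hne => ⟨sInf (b : Set ℕ), ?_, ?_⟩⟩
  · exact Finset.mem_coe.1 (Nat.sInf_mem (Finset.coe_nonempty.2 (hv.1 b hb)))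
  · intro j hj
    have hbm : sInf (b : Set ℕ) ∈ b :=
      Finset.mem_coe.1 (Nat.sInf_mem (Finset.coe_nonempty.2 (hv.1 b hb)))
    have h1 : sInf (c : Set ℕ) ≤ j := Nat.sInf_le (Finset.mem_coe.2 hj)
    have h2 := hmax b hb
    refine lt_of_le_of_ne (h2.trans h1) ?_
    intro h
    exact hne (part_unique hv hb hc hbm (h ▸ hj))

theorem last_unique {v : Finset (Finset ℕ)} {c c' : Finset ℕ} (h : IsLastBlock v c)
    (h' : IsLastBlock v c') : c = c' := by
  by_contra hne
  obtain ⟨i, hi, hi'⟩ := h.2 c' h'.1 (Ne.symm hne)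
  obtain ⟨j, hj, hj'⟩ := h'.2 c h.1 hne
  have := hi' j hj
  have := hj' i hi
  omega

theorem merge_card {g : Finset ℕ} {P Q : Finset (Finset ℕ)} (hP : IsPartitionOn g P)
    (h : MergeStep P Q) : Q.card + 1 = P.card := by
  obtain ⟨c, hc, b, hb, hne, rfl⟩ := h
  have h1 : b ∪ c ∉ (P.erase b).erase c := by
    intro h
    rw [Finset.mem_erase, Finset.mem_erase] at h
    obtain ⟨i, hi⟩ := hP.1 b hb
    exact h.2.1 (part_unique hP h.2.2 hb (Finset.mem_union_left _ hi) hi)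
  have h2 : c ∈ P.erase b := Finset.mem_erase.2 ⟨Ne.symm hne, hc.1⟩
  rw [Finset.card_insert_of_notMem h1, Finset.card_erase_add_one h2, Finset.card_erase_add_one hb]

/-- The two block partition `{c, g \ c}`. -/
def twoP (g c : Finset ℕ) : Finset (Finset ℕ) := {c, g \ c}

theorem mem_twoP {g c d : Finset ℕ} : d ∈ twoP g c ↔ d = c ∨ d = g \ c := by
  simp [twoP]

theorem part_sdiff_nonempty {g : Finset ℕ} {v : Finset (Finset ℕ)} (hv : IsPartitionOn g v)
    (hne : v ≠ {g}) {c : Finset ℕ} (hc : c ∈ v) : (g \ c).Nonempty := by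
  rw [Finset.sdiff_nonempty]
  intro h
  have hcg : c = g := Finset.Subset.antisymm (part_sub hv hc) h
  apply hne
  ext b
  rw [Finset.mem_singleton]
  constructor
  · intro hb
    obtain ⟨i, hi⟩ := hv.1 b hb
    rw [← hcg]
    exact part_unique hv hb hc hi (h (part_sub hv hb hi))
  · rintro rfl
    rwa [← hcg]

theorem twoP_mem {s : Word} {g : Finset ℕ} {v : Finset (Finset ℕ)} (hv : v ∈ APfin s g)
    (hne : v ≠ {g}) {c : Finset ℕ} (hc : IsLastBlock v c) : twoP g c ∈ APfin s g := by
  rw [mem_AP_iff] at *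
  obtain ⟨hv, av⟩ := hv
  refine ⟨mk_part ?_ ?_ ?_, ?_⟩
  · intro b hb
    rcases mem_twoP.1 hb with rfl | rfl
    · exact hv.1 _ hc.1
    · exact part_sdiff_nonempty hv hne hc.1
  · intro b hb b' hb' i hi hi'
    rcases mem_twoP.1 hb with rfl | rfl <;> rcases mem_twoP.1 hb' with rfl | rfl
    · rfl
    · exact absurd hi (Finset.mem_sdiff.1 hi').2
    · exact absurd hi' (Finset.mem_sdiff.1 hi).2
    · rfl
  · intro i
    constructor
    · intro hi
      by_cases h : i ∈ c
      · exact ⟨c, mem_twoP.2 (Or.inl rfl), h⟩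
      · exact ⟨g \ c, mem_twoP.2 (Or.inr rfl), Finset.mem_sdiff.2 ⟨hi, h⟩⟩
    · rintro ⟨b, hb, hi⟩
      rcases mem_twoP.1 hb with rfl | rfl
      · exact part_sub hv hc.1 hi
      · exact (Finset.mem_sdiff.1 hi).1
  · intro b hb b' hb' hbb j hj hw hin
    rcases mem_twoP.1 hb with rfl | rfl <;> rcases mem_twoP.1 hb' with rfl | rfl
    · exact hbb rfl
    · obtain ⟨-, i, hi, k, hk, hij, hjk⟩ := hin
      rw [Finset.mem_sdiff] at hk
      obtain ⟨d, hd, hkd⟩ := (part_cover hv).1 hk.1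
      have hdb : d ≠ b := by
        rintro rfl
        exact hk.2 hkd
      obtain ⟨i', hi', hlt⟩ := hc.2 d hd hdb
      exact av b hc.1 d hd (Ne.symm hdb) j hj hw
        ⟨fun h => hdb (part_unique hv hd hc.1 h hj), i', hi', k, hkd, hlt j hj, hjk⟩
    · rw [Finset.mem_sdiff] at hj
      obtain ⟨d, hd, hjd⟩ := (part_cover hv).1 hj.1
      exact av d hd b' hc.1 (by rintro rfl; exact hj.2 hjd) j hjd hw hin
    · exact hbb rfl

theorem refines_twoP {g : Finset ℕ} {x : Finset (Finset ℕ)} (hx : IsPartitionOn g x)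
    {c : Finset ℕ} (hc : c ∈ x) : Refines x (twoP g c) := by
  intro b hb
  by_cases h : b = c
  · exact ⟨c, mem_twoP.2 (Or.inl rfl), h ▸ Finset.Subset.refl _⟩
  · refine ⟨g \ c, mem_twoP.2 (Or.inr rfl), fun i hi => Finset.mem_sdiff.2
      ⟨part_sub hx hb hi, fun hic => h (part_unique hx hb hc hi hic)⟩⟩

theorem meet_eq_merge {g : Finset ℕ} {v x : Finset (Finset ℕ)} (hv : IsPartitionOn g v)
    (hx : IsPartitionOn g x) {c : Finset ℕ} (hc : IsLastBlock v c)
    (hcx : c ∉ x) (h : meetP x (twoP g c) = v) : MergeStep v x := by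
  have hmem : ∀ d, d ∈ v ↔ d.Nonempty ∧ ∃ b ∈ x, ∃ e ∈ twoP g c, b ∩ e = d := by
    intro d
    rw [← h, mem_meetP]
  have hcB : ∃ B ∈ x, c ⊆ B := by
    obtain ⟨-, B, hB, e, -, he⟩ := (hmem c).1 hc.1
    exact ⟨B, hB, he ▸ Finset.inter_subset_left⟩
  obtain ⟨B, hB, hcB⟩ := hcB
  have hBg := part_sub hx hB
  have hBc : B ∩ (g \ c) = B \ c := by
    ext i
    simp only [Finset.mem_inter, Finset.mem_sdiff]
    exact ⟨fun h => ⟨h.1, h.2.2⟩, fun h => ⟨h.1, hBg h.1, h.2⟩⟩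
  have hne : (B \ c).Nonempty := by
    rw [Finset.sdiff_nonempty]
    intro h'
    exact hcx (Finset.Subset.antisymm hcB h' ▸ hB)
  have hb : B \ c ∈ v := (hmem _).2 ⟨hne, B, hB, g \ c, mem_twoP.2 (Or.inr rfl), hBc⟩
  have hother : ∀ X ∈ x, X ≠ B → X ∩ (g \ c) = X := by
    intro X hX hXB
    rw [Finset.inter_eq_left]
    intro i hi
    exact Finset.mem_sdiff.2 ⟨part_sub hx hX hi, fun hic => hXB (part_unique hx hX hB hi (hcB hic))⟩
  refine ⟨c, hc, B \ c, hb, ?_, ?_⟩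
  · intro h'
    obtain ⟨i, hi⟩ := hne
    exact (Finset.mem_sdiff.1 hi).2 (h' ▸ hi)
  · rw [Finset.sdiff_union_of_subset hcB]
    ext X
    rw [Finset.mem_insert, Finset.mem_erase, Finset.mem_erase]
    constructor
    · intro hX
      by_cases hXB : X = B
      · exact Or.inl hXB
      · right
        obtain ⟨i, hi⟩ := hx.1 X hX
        refine ⟨?_, ?_, (hmem X).2 ⟨⟨i, hi⟩, X, hX, g \ c, mem_twoP.2 (Or.inr rfl), hother X hX hXB⟩⟩
        · rintro rfl
          exact hcx hX
        · intro h'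
          rw [h'] at hi
          exact hXB (part_unique hx hX hB (h' ▸ hi) (Finset.mem_sdiff.1 hi).1)
    · rintro (rfl | ⟨hXc, hXb, hXv⟩)
      · exact hB
      · obtain ⟨hXne, Y, hY, e, he, hYe⟩ := (hmem X).1 hXv
        by_cases hYB : Y = B
        · subst hYB
          rcases mem_twoP.1 he with rfl | rfl
          · exact absurd (hYe.symm.trans (Finset.inter_eq_right.2 hcB)) hXc
          · exact absurd (hYe.symm.trans hBc) hXb
        · rcases mem_twoP.1 he with rfl | rfl
          · obtain ⟨i, hi⟩ := hXne
            rw [← hYe, Finset.mem_inter] at hi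
            exact absurd (part_unique hx hY hB hi.1 (hcB hi.2)) hYB
          · rw [hother Y hY hYB] at hYe
            exact hYe ▸ hY

theorem merge_meet {g : Finset ℕ} {v x : Finset (Finset ℕ)} (hv : IsPartitionOn g v)
    {c : Finset ℕ} (hc : IsLastBlock v c) (h : MergeStep v x) : meetP x (twoP g c) = v := by
  obtain ⟨c', hc', b, hb, hbc, rfl⟩ := h
  obtain rfl := last_unique hc hc'
  have hdis : ∀ d ∈ v, d ≠ c → ∀ i ∈ d, i ∉ c := fun d hd hdc i hi hic =>
    hdc (part_unique hv hd hc.1 hi hic)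
  have e1 : (b ∪ c) ∩ c = c := Finset.inter_eq_right.2 Finset.subset_union_right
  have e3 : ∀ d ∈ v, d ≠ c → d ∩ (g \ c) = d := by
    intro d hd hdc
    rw [Finset.inter_eq_left]
    intro i hi
    exact Finset.mem_sdiff.2 ⟨part_sub hv hd hi, hdis d hd hdc i hi⟩
  have e2 : (b ∪ c) ∩ (g \ c) = b := by
    rw [Finset.union_inter_distrib_right, e3 b hb hbc, Finset.inter_sdiff_self, Finset.union_empty]
  ext d
  rw [mem_meetP]
  constructor
  · rintro ⟨hne, X, hX, e, he, rfl⟩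
    rw [Finset.mem_insert, Finset.mem_erase, Finset.mem_erase] at hX
    rcases hX with rfl | ⟨hXc, hXb, hXv⟩ <;> rcases mem_twoP.1 he with rfl | rfl
    · rw [e1]
      exact hc.1
    · rw [e2]
      exact hb
    · obtain ⟨i, hi⟩ := hne
      rw [Finset.mem_inter] at hi
      exact absurd hi.2 (hdis X hXv hXc i hi.1)
    · rw [e3 X hXv hXc]
      exact hXv
  · intro hd
    refine ⟨hv.1 d hd, ?_⟩
    by_cases hdc : d = c
    · subst hdc
      exact ⟨_, Finset.mem_insert_self _ _, d, mem_twoP.2 (Or.inl rfl), e1⟩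
    by_cases hdb : d = b
    · subst hdb
      exact ⟨_, Finset.mem_insert_self _ _, _, mem_twoP.2 (Or.inr rfl), e2⟩
    · refine ⟨d, Finset.mem_insert_of_mem ?_, _, mem_twoP.2 (Or.inr rfl), e3 d hd hdc⟩
      exact Finset.mem_erase.2 ⟨hdc, Finset.mem_erase.2 ⟨hdb, hd⟩⟩

open scoped Classical in
theorem mobius_rec {s : Word} {g : Finset ℕ} (hg : g.Nonempty)
    {m : Finset (Finset ℕ) → Finset (Finset ℕ) → ℂ}
    (hm : IsMobius s g m) {v : Finset (Finset ℕ)} (hv : v ∈ APfin s g) (hne : v ≠ {g}) :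
    m v {g} = - ∑ x ∈ (APfin s g).filter (fun x => MergeStep v x), m x {g} := by
  have pv := (mem_AP_iff.1 hv).1
  obtain ⟨c, hc⟩ := exists_last pv hg
  let T : APT s g := ⟨{g}, top_mem hg⟩
  let a : APT s g := ⟨twoP g c, twoP_mem hv hne hc⟩
  let V : APT s g := ⟨v, hv⟩
  have hT : ∀ x, x ≤ T := fun x b hb =>
    ⟨g, Finset.mem_singleton_self g, part_sub (mem_AP_iff.1 x.2).1 hb⟩
  have haT : a ≠ T := by
    intro h
    have h1 : twoP g c = {g} := congrArg Subtype.val h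
    have h2 : c ∈ twoP g c := mem_twoP.2 (Or.inl rfl)
    rw [h1, Finset.mem_singleton] at h2
    have := part_sdiff_nonempty pv hne hc.1
    rw [h2, Finset.sdiff_self] at this
    exact Finset.not_nonempty_empty this
  have hVa : V ≤ a := refines_twoP pv hc.1
  have key := weisner_aux T (fun x => m x.1 T.1) (fun u hu => mobius_dual hm T u hT hu) hT a haT V hVa
  have hsplit : (Finset.univ.filter fun x : APT s g => x ⊓ a = V)
      = insert V (Finset.univ.filter fun x : APT s g => MergeStep v x.1) := by
    ext x
    simp only [Finset.mem_filter, Finset.mem_univ, true_and, Finset.mem_insert]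
    have px := (mem_AP_iff.1 x.2).1
    constructor
    · intro h
      by_cases hcx : c ∈ x.1
      · left
        have : x ≤ a := refines_twoP px hcx
        rw [← h, inf_eq_left.2 this]
      · right
        exact meet_eq_merge pv px hc hcx (congrArg Subtype.val h)
    · rintro (rfl | h)
      · exact inf_eq_left.2 hVa
      · exact Subtype.ext (merge_meet pv hc h)
  rw [hsplit, Finset.sum_insert] at key
  · rw [eq_neg_iff_add_eq_zero, ← key]
    congr 1
    symm
    refine Finset.sum_bij (fun x _ => x.1) ?_ ?_ ?_ ?_
    · intro x hx
      exact Finset.mem_filter.2 ⟨x.2, (Finset.mem_filter.1 hx).2⟩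
    · intro x _ y _ hxy
      exact Subtype.ext hxy
    · intro x hx
      rw [Finset.mem_filter] at hx
      refine ⟨⟨x, hx.1⟩, ?_, rfl⟩
      exact Finset.mem_filter.2 ⟨Finset.mem_univ _, hx.2⟩
    · intro x _
      rfl
  · simp only [Finset.mem_filter, Finset.mem_univ, true_and]
    intro h
    have := merge_card pv h
    simp only [V] at this
    omega

/-! ### Counting shuffles -/

/-- The set of admissible shuffles of `u`. -/
def shufSet (s : Word) (u : Finset (Finset ℕ)) : Set (List (Finset (Finset ℕ))) :=
  {Lst | Lst.head? = some u ∧ Lst.getLast? = some {Finset.range s.length} ∧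
    (∀ P ∈ Lst, P ∈ APfin s (Finset.range s.length)) ∧ Lst.IsChain MergeStep}

theorem shuf_top (s : Word) (hg : (Finset.range s.length).Nonempty) :
    shufSet s {Finset.range s.length} = {[{Finset.range s.length}]} := by
  ext L
  simp only [shufSet, Set.mem_setOf_eq, Set.mem_singleton_iff]
  constructor
  · rintro ⟨h1, -, -, h4⟩
    match L, h1, h4 with
    | [a], h1, _ => simpa using h1
    | a :: b :: L, h1, h4 =>
      exfalso
      simp only [List.head?_cons, Option.some.injEq] at h1
      subst h1
      have h5 : MergeStep {Finset.range s.length} b := (List.isChain_cons_cons.1 h4).1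
      obtain ⟨c, hc, d, hd, hne, -⟩ := h5
      exact hne ((Finset.mem_singleton.1 hd).trans (Finset.mem_singleton.1 hc.1).symm)
  · rintro rfl
    refine ⟨rfl, rfl, ?_, ?_⟩
    · intro P hP
      rw [List.mem_singleton] at hP
      subst hP
      exact top_mem hg
    · exact List.isChain_singleton _

open scoped Classical in
theorem shuf_step (s : Word) {v : Finset (Finset ℕ)} (hv : v ∈ APfin s (Finset.range s.length))
    (hne : v ≠ {Finset.range s.length}) :
    shufSet s v = ⋃ x ∈ (APfin s (Finset.range s.length)).filter (fun x => MergeStep v x),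
      Set.image (List.cons v) (shufSet s x) := by
  ext L
  simp only [Set.mem_iUnion, Set.mem_image, Finset.mem_filter, exists_prop]
  constructor
  · rintro ⟨h1, h2, h3, h4⟩
    match L, h1, h2, h3, h4 with
    | [a], h1, h2, _, _ =>
      exfalso
      simp only [List.head?_cons, List.getLast?_singleton, Option.some.injEq] at h1 h2
      exact hne (h1.symm.trans h2)
    | a :: b :: L, h1, h2, h3, h4 =>
      simp only [List.head?_cons, Option.some.injEq] at h1
      subst h1
      rw [List.isChain_cons_cons] at h4
      rw [List.getLast?_cons_cons] at h2
      refine ⟨b, ⟨h3 b (by simp), h4.1⟩, b :: L, ⟨rfl, h2, ?_, h4.2⟩, rfl⟩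
      intro P hP
      exact h3 P (List.mem_cons_of_mem _ hP)
  · rintro ⟨x, ⟨hx, hvx⟩, L', ⟨h1, h2, h3, h4⟩, rfl⟩
    match L', h1, h2, h3, h4 with
    | b :: L, h1, h2, h3, h4 =>
      simp only [List.head?_cons, Option.some.injEq] at h1
      subst h1
      refine ⟨rfl, ?_, ?_, ?_⟩
      · rw [List.getLast?_cons_cons]
        exact h2
      · intro P hP
        rcases List.mem_cons.1 hP with rfl | hP
        · exact hv
        · exact h3 P hP
      · exact List.isChain_cons_cons.2 ⟨hvx, h4⟩

open scoped Classical in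
theorem shuf_rec (s : Word) {v : Finset (Finset ℕ)} (hv : v ∈ APfin s (Finset.range s.length))
    (hne : v ≠ {Finset.range s.length})
    (hfin : ∀ x ∈ (APfin s (Finset.range s.length)).filter (fun x => MergeStep v x),
      (shufSet s x).Finite) :
    (shufSet s v).Finite ∧ (shufSet s v).ncard =
      ∑ x ∈ (APfin s (Finset.range s.length)).filter (fun x => MergeStep v x),
        (shufSet s x).ncard := by
  rw [shuf_step s hv hne]
  constructor
  · exact Set.Finite.biUnion (Finset.finite_toSet _) fun x hx => (hfin x hx).image _
  · generalize (APfin s (Finset.range s.length)).filter (fun x => MergeStep v x) = F at hfin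
    induction F using Finset.induction_on with
    | empty => simp
    | insert a F ha ih =>
      have f1 : (Set.image (List.cons v) (shufSet s a)).Finite :=
        (hfin a (Finset.mem_insert_self _ _)).image _
      have f2 : (⋃ x ∈ F, Set.image (List.cons v) (shufSet s x)).Finite :=
        Set.Finite.biUnion (Finset.finite_toSet _) fun x hx =>
          (hfin x (Finset.mem_insert_of_mem hx)).image _
      rw [Finset.set_biUnion_insert, Set.ncard_union_eq ?_ f1 f2, Finset.sum_insert ha,
        ih (fun x hx => hfin x (Finset.mem_insert_of_mem hx)),
        Set.ncard_image_of_injective _ List.cons_injective]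
      · rw [Set.disjoint_left]
        intro L hL hL'
        simp only [Set.mem_iUnion, Set.mem_image, exists_prop] at hL hL'
        obtain ⟨L1, h1, rfl⟩ := hL
        obtain ⟨x, hx, L2, h2, h3⟩ := hL'
        obtain rfl : L2 = L1 := List.cons_injective h3
        have : x = a := Option.some.inj (h2.1.symm.trans h1.1)
        exact ha (this ▸ hx)

theorem main_aux (s : Word) (hg : (Finset.range s.length).Nonempty)
    (m : Finset (Finset ℕ) → Finset (Finset ℕ) → ℂ)
    (hm : IsMobius s (Finset.range s.length) m) (n : ℕ) :
    ∀ v ∈ APfin s (Finset.range s.length), v.card = n → (shufSet s v).Finite ∧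
    m v {Finset.range s.length} = (-1) ^ (v.card - 1) * ((shufSet s v).ncard : ℂ) := by
  classical
  induction n with
  | zero =>
    intro v hv h0
    exfalso
    rw [Finset.card_eq_zero] at h0
    obtain ⟨i, hi⟩ := hg
    obtain ⟨b, hb, -⟩ := (part_cover (mem_AP_iff.1 hv).1).1 hi
    rw [h0] at hb
    exact absurd hb (Finset.notMem_empty b)
  | succ n ih =>
    intro v hv hn
    by_cases hne : v = {Finset.range s.length}
    · subst hne
      rw [shuf_top s hg]
      refine ⟨Set.finite_singleton _, ?_⟩
      rw [hm.1 _ hv]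
      simp
    · have hstep : ∀ x ∈ (APfin s (Finset.range s.length)).filter (fun x => MergeStep v x),
          x.card = n ∧ x ∈ APfin s (Finset.range s.length) := by
        intro x hx
        rw [Finset.mem_filter] at hx
        have := merge_card (mem_AP_iff.1 hv).1 hx.2
        exact ⟨by omega, hx.1⟩
      have hn0 : n ≠ 0 := by
        rintro rfl
        apply hne
        obtain ⟨b, rfl⟩ := Finset.card_eq_one.1 hn
        have h3 := (mem_AP_iff.1 hv).1.2.2
        rw [Finset.sup_singleton] at h3
        rw [← h3]
        rfl
      obtain ⟨hf, hc⟩ := shuf_rec s hv hne fun x hx => (ih x (hstep x hx).2 (hstep x hx).1).1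
      refine ⟨hf, ?_⟩
      rw [mobius_rec hg hm hv hne, hc, hn]
      push_cast
      rw [Finset.mul_sum, ← Finset.sum_neg_distrib]
      apply Finset.sum_congr rfl
      intro x hx
      rw [(ih x (hstep x hx).2 (hstep x hx).1).2, (hstep x hx).1]
      obtain ⟨k, rfl⟩ := Nat.exists_eq_succ_of_ne_zero hn0
      simp only [Nat.succ_eq_add_one, Nat.add_sub_cancel, pow_succ]
      ring


open scoped Classical in
/-- `m(v|1_s) = (−1)^{b(v)−1} a(v)`: the Möbius function of `AP(s)`
against the one-block partition is a sign times the number of admissible shuffles. -/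
theorem mobius_eq_shuffles (s : Word) (hs : s ≠ [])
    (m : Finset (Finset ℕ) → Finset (Finset ℕ) → ℂ)
    (hm : IsMobius s (Finset.range s.length) m)
    (v : Finset (Finset ℕ)) (hv : v ∈ APfin s (Finset.range s.length)) :
    m v {Finset.range s.length} = (-1) ^ (v.card - 1) * (shuffleCount s v : ℂ) := by
  have hg : (Finset.range s.length).Nonempty := by
    rw [Finset.nonempty_range_iff]
    exact fun h => hs (List.length_eq_zero_iff.1 h)
  exact (main_aux s hg m hm v.card v hv rfl).2
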